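/- arXiv:0912.5185 — 2 statements merged into one kernel-verified Lean document; each statement's English description precedes it below -/
import Mathlib

section
/- Let F be a field of characteristic zero and r a positive integer. For every invertible r×r matrix G over F((t)) there exists L ∈ GL_r(F[[t]]) such that the product L·G is upper triangular, every diagonal entry of L·G is a nonzero monomial c·tⁿ with c ∈ F\{0} and n ∈ ℤ, and every entry of L·G strictly above the diagonal is a Laurent polynomial, i.e. lies in the image of F[t,t⁻¹] in F((t)). -/
/-!
Write `K = F((t))` and `R = F[[t]]`. The proof is by induction on `r`.

Since `R` is a discrete valuation ring, a nonzero entry of least order in the first column of `G`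
divides all the others, so row operations over `R` bring that column to `(tᵐ, 0, …, 0)`
(`exists_clear_column`). The induction hypothesis, applied to the remaining square block, replaces
it by a reduced matrix `T`; it remains to correct the row `b` to the right of `tᵐ`.

No entry-by-entry division is needed for this. As `T` is invertible over `K` we may write
`b = w T`, and every Laurent series is the sum of a power series and a Laurent polynomial
(`exists_powerSeries_add_laurentPoly`), say `w = y + p`. Subtracting the `R`-combination `y T` of
the lower rows from `b` leaves `p T`, whose entries are Laurent polynomials because those of `p`
and `T` are (`exists_row_correction`).
-/

/-- An element of the Laurent series field `F((t))` lies in the canonical image of the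
power series ring `F[[t]]`. -/
def InPowerSeries (F : Type*) [Field F] (x : LaurentSeries F) : Prop :=
  x ∈ Set.range (HahnSeries.ofPowerSeries ℤ F)

/-- An element of the Laurent series field `F((t))` lies in the canonical image of the
Laurent polynomial ring `F[t,t⁻¹]`: it is of the form `t⁻ⁿ · q(t)` for a polynomial `q`. -/
def InLaurentPoly (F : Type*) [Field F] (x : LaurentSeries F) : Prop :=
  ∃ (n : ℕ) (q : Polynomial F),
    x = HahnSeries.single (-n : ℤ) (1 : F) * HahnSeries.ofPowerSeries ℤ F (q : PowerSeries F)

/-- A square matrix over `F((t))` is reduced if it is upper triangular with nonzero monomials on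
the diagonal and Laurent polynomials above it. -/
structure IsReducedMatrix {F : Type*} [Field F] {n : ℕ}
    (T : Matrix (Fin n) (Fin n) (LaurentSeries F)) : Prop where
  lower : ∀ i j, j < i → T i j = 0
  diag : ∀ i, ∃ (c : F) (n : ℤ), c ≠ 0 ∧ T i i = HahnSeries.single n c
  upper : ∀ i j, i < j → InLaurentPoly F (T i j)

section LaurentPoly

variable {F : Type*} [Field F]

local notation "φ" => HahnSeries.ofPowerSeries ℤ F

theorem InLaurentPoly.zero : InLaurentPoly F 0 := ⟨0, 0, by simp⟩

theorem single_neg_eq_mul (n m : ℕ) :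
    (HahnSeries.single (-n : ℤ) (1 : F)) =
      HahnSeries.single (-(n + m : ℕ) : ℤ) (1 : F) * φ (PowerSeries.X ^ m) := by
  rw [HahnSeries.ofPowerSeries_X_pow, HahnSeries.single_mul_single]
  congr 1
  · push_cast; ring_nf
  · simp

theorem InLaurentPoly.add {x y : LaurentSeries F} (hx : InLaurentPoly F x)
    (hy : InLaurentPoly F y) : InLaurentPoly F (x + y) := by
  obtain ⟨n, p, rfl⟩ := hx
  obtain ⟨m, q, rfl⟩ := hy
  refine ⟨n + m, Polynomial.X ^ m * p + Polynomial.X ^ n * q, ?_⟩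
  rw [single_neg_eq_mul n m, single_neg_eq_mul m n, add_comm m n]
  simp only [Polynomial.coe_add, Polynomial.coe_mul, Polynomial.coe_pow, Polynomial.coe_X,
    map_add, map_mul]
  ring

theorem InLaurentPoly.mul {x y : LaurentSeries F} (hx : InLaurentPoly F x)
    (hy : InLaurentPoly F y) : InLaurentPoly F (x * y) := by
  obtain ⟨n, p, rfl⟩ := hx
  obtain ⟨m, q, rfl⟩ := hy
  refine ⟨n + m, p * q, ?_⟩
  have h : HahnSeries.single (-(n + m : ℕ) : ℤ) (1 : F) =
      HahnSeries.single (-n : ℤ) (1 : F) * HahnSeries.single (-m : ℤ) (1 : F) := by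
    rw [HahnSeries.single_mul_single]
    congr 1
    · push_cast; ring_nf
    · simp
  rw [h]
  simp only [Polynomial.coe_mul, map_mul]
  ring

theorem InLaurentPoly.sum {ι : Type*} (s : Finset ι) (f : ι → LaurentSeries F)
    (h : ∀ i ∈ s, InLaurentPoly F (f i)) : InLaurentPoly F (∑ i ∈ s, f i) :=
  Finset.sum_induction f _ (fun _ _ => InLaurentPoly.add) InLaurentPoly.zero h

theorem InLaurentPoly.single (n : ℤ) (c : F) : InLaurentPoly F (HahnSeries.single n c) := by
  refine ⟨n.natAbs, Polynomial.C c * Polynomial.X ^ (n + n.natAbs).toNat, ?_⟩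
  have h : ((n + n.natAbs).toNat : ℤ) = n + n.natAbs := Int.toNat_of_nonneg (by omega)
  simp only [Polynomial.coe_mul, Polynomial.coe_C, Polynomial.coe_pow, Polynomial.coe_X, map_mul,
    HahnSeries.ofPowerSeries_C, HahnSeries.ofPowerSeries_X_pow, HahnSeries.C_apply,
    HahnSeries.single_mul_single, h]
  congr 1
  · ring_nf
  · simp

/-- Every Laurent series is `t⁻ⁿ f` for a power series `f`; truncating `f` at degree `n` separates
the polar part. -/
theorem exists_powerSeries_add_laurentPoly (x : LaurentSeries F) :
    ∃ (y : PowerSeries F) (p : LaurentSeries F), InLaurentPoly F p ∧ x = φ y + p := by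
  obtain ⟨n, f, hf⟩ : ∃ (n : ℕ) (f : PowerSeries F),
      x = HahnSeries.single (-n : ℤ) (1 : F) * φ f := by
    refine ⟨x.order.natAbs, PowerSeries.X ^ (x.order + x.order.natAbs).toNat *
      LaurentSeries.powerSeriesPart x, ?_⟩
    have h : ((x.order + x.order.natAbs).toNat : ℤ) = x.order + x.order.natAbs :=
      Int.toNat_of_nonneg (by omega)
    rw [map_mul, HahnSeries.ofPowerSeries_X_pow, ← mul_assoc, HahnSeries.single_mul_single, h]
    conv_lhs => rw [← LaurentSeries.single_order_mul_powerSeriesPart x]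
    congr 2
    · ring_nf
    · simp
  refine ⟨PowerSeries.mk fun i => PowerSeries.coeff (i + n) f,
    HahnSeries.single (-n : ℤ) (1 : F) * φ (PowerSeries.trunc n f), ⟨n, _, rfl⟩, ?_⟩
  rw [hf]
  conv_lhs => rw [PowerSeries.eq_shift_mul_X_pow_add_trunc n f]
  rw [map_add, mul_add, map_mul, HahnSeries.ofPowerSeries_X_pow, mul_left_comm,
    HahnSeries.single_mul_single]
  simp

/-- Factorization of a nonzero Laurent series into a power of `t` and a unit of `F[[t]]`. -/
theorem eq_single_mul_unit {x : LaurentSeries F} (hx : x ≠ 0) :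
    ∃ u : (PowerSeries F)ˣ, x = HahnSeries.single x.order (1 : F) * φ u := by
  have hu : IsUnit (LaurentSeries.powerSeriesPart x) := by
    rw [PowerSeries.isUnit_iff_constantCoeff, ← PowerSeries.coeff_zero_eq_constantCoeff_apply,
      LaurentSeries.powerSeriesPart_coeff, isUnit_iff_ne_zero]
    simpa using hx
  exact ⟨hu.unit, (LaurentSeries.single_order_mul_powerSeriesPart x).symm⟩

theorem exists_mul_of_order_le {x y : LaurentSeries F} (hx : x ≠ 0)
    (hxy : y ≠ 0 → x.order ≤ y.order) : ∃ c : PowerSeries F, y = φ c * x := by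
  rcases eq_or_ne y 0 with rfl | hy
  · exact ⟨0, by simp⟩
  obtain ⟨u, hu⟩ := eq_single_mul_unit hx
  obtain ⟨v, hv⟩ := eq_single_mul_unit hy
  have h : ((y.order - x.order).toNat : ℤ) = y.order - x.order :=
    Int.toNat_of_nonneg (by have := hxy hy; omega)
  refine ⟨PowerSeries.X ^ (y.order - x.order).toNat * (v : PowerSeries F) *
    ((u⁻¹ : (PowerSeries F)ˣ) : PowerSeries F), ?_⟩
  have hs : HahnSeries.single (y.order - x.order) (1 : F) * HahnSeries.single x.order (1 : F)
      = HahnSeries.single y.order (1 : F) := by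
    rw [HahnSeries.single_mul_single]; simp
  have huu : φ ((u⁻¹ : (PowerSeries F)ˣ) : PowerSeries F) * φ u = 1 := by rw [← map_mul]; simp
  rw [map_mul, map_mul, HahnSeries.ofPowerSeries_X_pow, h]
  generalize x.order = a at *
  generalize y.order = b at *
  rw [hu, hv, ← hs]
  linear_combination (-HahnSeries.single (b - a) (1 : F) * HahnSeries.single a (1 : F) * φ v) * huu

end LaurentPoly

section Reduction

variable {F : Type*} [Field F]

local notation "φ" => HahnSeries.ofPowerSeries ℤ F

theorem IsReducedMatrix.det_ne_zero {n : ℕ} {T : Matrix (Fin n) (Fin n) (LaurentSeries F)}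
    (hT : IsReducedMatrix T) : T.det ≠ 0 := by
  rw [Matrix.det_of_isUpperTriangular (M := T) (fun i j h => hT.lower i j h)]
  refine Finset.prod_ne_zero_iff.2 fun i _ => ?_
  obtain ⟨c, n, hc, h⟩ := hT.diag i
  rw [h]
  simpa using hc

theorem IsReducedMatrix.inLaurentPoly {n : ℕ} {T : Matrix (Fin n) (Fin n) (LaurentSeries F)}
    (hT : IsReducedMatrix T) (i j : Fin n) : InLaurentPoly F (T i j) := by
  rcases lt_trichotomy i j with h | rfl | h
  · exact hT.upper i j h
  · obtain ⟨c, n, -, h⟩ := hT.diag i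
    exact h ▸ InLaurentPoly.single n c
  · exact hT.lower i j h ▸ InLaurentPoly.zero

/-- A row can be made to consist of Laurent polynomials by subtracting an `F[[t]]`-combination of
the rows of a reduced matrix. -/
theorem exists_row_correction {n : ℕ} {T : Matrix (Fin n) (Fin n) (LaurentSeries F)}
    (hT : IsReducedMatrix T) (b : Fin n → LaurentSeries F) :
    ∃ y : Fin n → PowerSeries F, ∀ j, InLaurentPoly F (b j - ∑ i, φ (y i) * T i j) := by
  choose y p hp h using fun i => exists_powerSeries_add_laurentPoly ((Matrix.vecMul b T⁻¹) i)
  refine ⟨y, fun j => ?_⟩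
  have hb : b j = ∑ i, (φ (y i) + p i) * T i j := by
    have : Matrix.vecMul (Matrix.vecMul b T⁻¹) T = b := by
      rw [Matrix.vecMul_vecMul, Matrix.nonsing_inv_mul _ (isUnit_iff_ne_zero.2 hT.det_ne_zero),
        Matrix.vecMul_one]
    conv_lhs => rw [← this]
    simp only [Matrix.vecMul, dotProduct] at h ⊢
    exact Finset.sum_congr rfl fun i _ => by rw [← h i]
  rw [hb, ← Finset.sum_sub_distrib]
  refine InLaurentPoly.sum _ _ fun i _ => ?_
  rw [add_mul, add_sub_cancel_left]
  exact (hp i).mul (hT.inLaurentPoly i j)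

/-- Row operations over `F[[t]]` bring the first column of an invertible matrix to
`(tᵐ, 0, …, 0)`. -/
theorem exists_clear_column {n : ℕ} (G : Matrix (Fin (n + 1)) (Fin (n + 1)) (LaurentSeries F))
    (hG : G.det ≠ 0) :
    ∃ L : Matrix (Fin (n + 1)) (Fin (n + 1)) (PowerSeries F), IsUnit L.det ∧
      (∃ m : ℤ, (L.map φ * G) 0 0 = HahnSeries.single m 1) ∧
      ∀ i : Fin n, (L.map φ * G) i.succ 0 = 0 := by
  obtain ⟨p, hp, hmin⟩ : ∃ p, G p 0 ≠ 0 ∧ ∀ i, G i 0 ≠ 0 → (G p 0).order ≤ (G i 0).order := by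
    classical
    have hne : (Finset.univ.filter fun i => G i 0 ≠ 0).Nonempty := by
      by_contra hcon
      refine hG (Matrix.det_eq_zero_of_column_eq_zero 0 fun i => ?_)
      by_contra hi
      exact hcon ⟨i, by simpa using hi⟩
    obtain ⟨p, hp, h⟩ := Finset.exists_min_image _ (fun i => (G i 0).order) hne
    exact ⟨p, by simpa using hp, fun i hi => h i (by simpa using hi)⟩
  obtain ⟨u, hu⟩ := eq_single_mul_unit hp
  choose c hc using fun i => exists_mul_of_order_le hp (hmin i)
  -- `σ` moves row `p` to the top; `E` then scales that row to a monomial and clears the column.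
  let σ := Equiv.swap 0 p
  let E : Matrix (Fin (n + 1)) (Fin (n + 1)) (PowerSeries F) :=
    Matrix.of (Matrix.vecCons (Matrix.vecCons ((u⁻¹ : (PowerSeries F)ˣ) : PowerSeries F) 0)
      fun i => Matrix.vecCons (-c (σ i.succ)) ((1 : Matrix (Fin n) (Fin n) (PowerSeries F)) i))
  have hE : IsUnit E.det := by
    have : E.submatrix Fin.succ Fin.succ = 1 := by ext i j; simp [E]
    rw [Matrix.det_succ_row_zero, Fin.sum_univ_succ]
    simp only [Fin.succAbove_zero, this]
    simp [E]
  -- Permuting the columns of `E` by `σ` has the effect of permuting the rows of `G`.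
  have key : ∀ i j, ((E.submatrix id σ).map φ * G) i j
      = φ (E i 0) * G p j + ∑ k : Fin n, φ (E i k.succ) * G (σ k.succ) j := by
    intro i j
    rw [Matrix.mul_apply, ← Equiv.sum_comp σ, Fin.sum_univ_succ]
    simp [σ]
  refine ⟨E.submatrix id σ, ?_, ⟨(G p 0).order, ?_⟩, fun i => ?_⟩
  · rw [Matrix.det_permute']
    exact ((Int.isUnit_iff.2 (by simpa using Int.units_eq_one_or _ )).map
      (Int.castRingHom (PowerSeries F))).mul hE
  · rw [key]
    have h : (φ u)⁻¹ * φ u = 1 := inv_mul_cancel₀ (u.isUnit.map φ).ne_zero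
    simp [E]
    generalize (G p 0).order = a at *
    rw [hu]
    linear_combination (HahnSeries.single a (1 : F)) * h
  · rw [key]
    simp [E, Matrix.one_apply, hc (σ i.succ)]

theorem exists_isReducedMatrix (n : ℕ) (G : Matrix (Fin n) (Fin n) (LaurentSeries F))
    (hG : G.det ≠ 0) :
    ∃ L : Matrix (Fin n) (Fin n) (PowerSeries F), IsUnit L.det ∧ IsReducedMatrix (L.map φ * G) := by
  induction n with
  | zero => exact ⟨1, by simp, ⟨fun i => i.elim0, fun i => i.elim0, fun i => i.elim0⟩⟩
  | succ n ih =>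
    obtain ⟨L₀, hL₀, ⟨m, hm⟩, hcol⟩ := exists_clear_column G hG
    set H := L₀.map φ * G with hH
    have hHdet : H.det ≠ 0 := by
      have : (L₀.map φ).det = φ L₀.det := (RingHom.map_det φ L₀).symm
      rw [hH, Matrix.det_mul, this]
      exact mul_ne_zero (hL₀.map φ).ne_zero hG
    have hH' : (H.submatrix Fin.succ Fin.succ).det ≠ 0 := by
      intro h0
      apply hHdet
      rw [Matrix.det_succ_column_zero, Fin.sum_univ_succ]
      simp [hcol, h0]
    obtain ⟨L', hL', hT⟩ := ih _ hH'
    set T := L'.map φ * H.submatrix Fin.succ Fin.succ with hTdef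
    obtain ⟨y, hy⟩ := exists_row_correction hT fun j => H 0 j.succ
    let L₁ : Matrix (Fin (n + 1)) (Fin (n + 1)) (PowerSeries F) :=
      Matrix.of (Matrix.vecCons (Matrix.vecCons 1 (-(Matrix.vecMul y L'))) fun i => Matrix.vecCons 0 (L' i))
    have hL₁ : IsUnit L₁.det := by
      have : L₁.submatrix Fin.succ Fin.succ = L' := by ext i j; simp [L₁]
      rw [Matrix.det_succ_column_zero, Fin.sum_univ_succ]
      simp [L₁] at this ⊢
      simpa [this] using hL'
    have h00 : (L₁.map φ * H) 0 0 = HahnSeries.single m 1 := by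
      simp [Matrix.mul_apply, Fin.sum_univ_succ, hcol, hm, L₁]
    have hs0 : ∀ i : Fin n, (L₁.map φ * H) i.succ 0 = 0 := fun i => by
      simp [Matrix.mul_apply, Fin.sum_univ_succ, hcol, L₁]
    have hss : ∀ i j : Fin n, (L₁.map φ * H) i.succ j.succ = T i j := fun i j => by
      simp [Matrix.mul_apply, Fin.sum_univ_succ, L₁, hTdef]
    have h0s : ∀ j : Fin n,
        (L₁.map φ * H) 0 j.succ = H 0 j.succ - ∑ i, φ (y i) * T i j := fun j => by
      have e : ∑ i, φ (y i) * T i j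
          = ∑ k, φ (Matrix.vecMul y L' k) * H k.succ j.succ := by
        simp only [hTdef, Matrix.mul_apply, Matrix.vecMul, dotProduct, map_sum, map_mul,
          Finset.mul_sum, Finset.sum_mul, Matrix.map_apply, Matrix.submatrix_apply]
        rw [Finset.sum_comm]
        simp only [mul_assoc]
      rw [e]
      simp [Matrix.mul_apply, Fin.sum_univ_succ, L₁, sub_eq_add_neg]
    refine ⟨L₁ * L₀, by rw [Matrix.det_mul]; exact hL₁.mul hL₀, ?_⟩
    rw [Matrix.map_mul, Matrix.mul_assoc, ← hH]
    refine ⟨fun i j => ?_, fun i => ?_, fun i j => ?_⟩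
    · refine Fin.cases (fun h => absurd h (Fin.not_lt_zero _)) (fun i => ?_) i
      refine Fin.cases (fun _ => hs0 i) (fun j h => ?_) j
      rw [hss]
      exact hT.lower i j (Fin.succ_lt_succ_iff.1 h)
    · refine Fin.cases ⟨1, m, one_ne_zero, h00⟩ (fun i => ?_) i
      rw [hss]
      exact hT.diag i
    · refine Fin.cases (fun h => absurd h (Fin.not_lt_zero _)) (fun j => ?_) j
      refine Fin.cases (fun _ => ?_) (fun i h => ?_) i
      · rw [h0s]
        exact hy j
      · rw [hss]
        exact hT.upper i j (Fin.succ_lt_succ_iff.1 h)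

end Reduction

/-- For every `G ∈ GL_r(F((t)))` there is `L ∈ GL_r(F[[t]])` such that `L·G` is upper
triangular, with nonzero monomials `c·tⁿ` on the diagonal and Laurent polynomials strictly
above the diagonal. -/
theorem laurent_series_matrix_triangularization
    (F : Type*) [Field F] [CharZero F] (r : ℕ) (hr : 0 < r)
    (G Ginv : Matrix (Fin r) (Fin r) (LaurentSeries F))
    (hG₁ : G * Ginv = 1) (hG₂ : Ginv * G = 1) :
    ∃ L Linv : Matrix (Fin r) (Fin r) (LaurentSeries F),
      L * Linv = 1 ∧ Linv * L = 1 ∧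
      (∀ i j, InPowerSeries F (L i j)) ∧ (∀ i j, InPowerSeries F (Linv i j)) ∧
      (∀ i j : Fin r, j < i → (L * G) i j = 0) ∧
      (∀ i : Fin r, ∃ (c : F) (n : ℤ), c ≠ 0 ∧ (L * G) i i = HahnSeries.single n c) ∧
      (∀ i j : Fin r, i < j → InLaurentPoly F ((L * G) i j)) := by
  have hdet : G.det ≠ 0 := fun h => by
    have := congrArg Matrix.det hG₁
    rw [Matrix.det_mul, h, zero_mul, Matrix.det_one] at this
    exact zero_ne_one this
  obtain ⟨L, hL, hT⟩ := exists_isReducedMatrix r G hdet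
  refine ⟨L.map (HahnSeries.ofPowerSeries ℤ F), L⁻¹.map (HahnSeries.ofPowerSeries ℤ F), ?_, ?_,
    fun i j => ⟨L i j, rfl⟩, fun i j => ⟨L⁻¹ i j, rfl⟩, hT.lower, hT.diag, hT.upper⟩
  · rw [← Matrix.map_mul, Matrix.mul_nonsing_inv _ hL]
    exact Matrix.map_one _ (map_zero _) (map_one _)
  · rw [← Matrix.map_mul, Matrix.nonsing_inv_mul _ hL]
    exact Matrix.map_one _ (map_zero _) (map_one _)
end

section
/- Let F be a field of characteristic zero, r a positive integer, and N an r×r matrix over F((t)). Suppose there exists G ∈ GL_r(F((t))) such that the gauge transform N_[G] := G·N·G⁻¹ + G′·G⁻¹ has at most a simple pole at t = 0, i.e. t·N_[G] has all entries in F[[t]]. Then there exists H ∈ GL_r(F[t,t⁻¹]) such that t·N_[H] has all entries in F[[t]], i.e. the gauge transform of N by a matrix invertible over the Laurent polynomials already has at most a simple pole at t = 0. -/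
/-- The entrywise formal derivative of a matrix of Laurent series. -/
noncomputable def matDeriv (F : Type*) [Field F] {r : ℕ}
    (M : Matrix (Fin r) (Fin r) (LaurentSeries F)) :
    Matrix (Fin r) (Fin r) (LaurentSeries F) :=
  M.map (LaurentSeries.derivative F)

/-- A matrix `M` over `F((t))` has at most a simple pole at `t = 0`: every entry of `t·M`
lies in `F[[t]]`. -/
def SimplePole (F : Type*) [Field F] {r : ℕ}
    (M : Matrix (Fin r) (Fin r) (LaurentSeries F)) : Prop :=
  ∀ i j, InPowerSeries F (HahnSeries.single (1 : ℤ) (1 : F) * M i j)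

/-! ### The ring of Laurent polynomials inside `F((t))` -/

open HahnSeries in
/-- The Laurent polynomials as a subring of `F((t))`. -/
def laurentPolySubring (F : Type*) [Field F] : Subring (LaurentSeries F) where
  carrier := {x | InLaurentPoly F x}
  mul_mem' := by
    rintro _ _ ⟨n, q, rfl⟩ ⟨m, p, rfl⟩
    refine ⟨n + m, q * p, ?_⟩
    rw [Polynomial.coe_mul, map_mul, mul_mul_mul_comm, single_mul_single]
    congr 2
    · push_cast; congr 1; ring
    · simp
  one_mem' := ⟨0, 1, by simp⟩
  add_mem' := by
    rintro _ _ ⟨n, q, rfl⟩ ⟨m, p, rfl⟩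
    refine ⟨n + m, Polynomial.X ^ m * q + Polynomial.X ^ n * p, ?_⟩
    simp only [Polynomial.coe_add, Polynomial.coe_mul, Polynomial.coe_pow, Polynomial.coe_X,
      map_add, map_mul, mul_add, ofPowerSeries_X_pow, ← mul_assoc, single_mul_single]
    congr 4 <;> simp
  zero_mem' := ⟨0, 0, by simp⟩
  neg_mem' := by
    rintro _ ⟨n, q, rfl⟩
    exact ⟨n, -q, by simp⟩

theorem single_mem_laurentPolySubring {F : Type*} [Field F] (n : ℤ) (a : F) :
    HahnSeries.single n a ∈ laurentPolySubring F := by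
  refine ⟨n.natAbs, Polynomial.C a * Polynomial.X ^ (n + n.natAbs).toNat, ?_⟩
  have h : ((n + n.natAbs).toNat : ℤ) = n + n.natAbs := by omega
  simp only [Polynomial.coe_mul, Polynomial.coe_pow, Polynomial.coe_X, Polynomial.coe_C, map_mul,
    HahnSeries.ofPowerSeries_X_pow, HahnSeries.ofPowerSeries_C, h, HahnSeries.C_apply,
    HahnSeries.single_mul_single]
  simp

/-- Monomials with nonzero coefficient are units of `F[t,t⁻¹]`. -/
theorem isUnit_single_laurentPolySubring {F : Type*} [Field F] (n : ℤ) {a : F} (ha : a ≠ 0) :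
    IsUnit (⟨HahnSeries.single n a, single_mem_laurentPolySubring n a⟩ :
      laurentPolySubring F) := by
  refine IsUnit.of_mul_eq_one
    ⟨HahnSeries.single (-n) a⁻¹, single_mem_laurentPolySubring _ _⟩ (Subtype.ext ?_)
  simp [HahnSeries.single_mul_single, ha]

/-! ### The factorization -/

open Matrix in
/-- One column operation of the reduction: if `A` is singular at `t = 0`, then an invertible
Laurent polynomial matrix divides its determinant by `t`, up to a nonzero constant, and keeps
the entries in `F[[t]]`. -/
theorem exists_laurent_column_step {F : Type*} [Field F] {r : ℕ}
    (A : Matrix (Fin r) (Fin r) (PowerSeries F))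
    (hA : PowerSeries.constantCoeff A.det = 0) :
    ∃ (E : Matrix (Fin r) (Fin r) (laurentPolySubring F))
      (B : Matrix (Fin r) (Fin r) (PowerSeries F)) (a : F), IsUnit E ∧ a ≠ 0 ∧
      (HahnSeries.ofPowerSeries ℤ F).mapMatrix A * (laurentPolySubring F).subtype.mapMatrix E
        = (HahnSeries.ofPowerSeries ℤ F).mapMatrix B ∧
      PowerSeries.X * B.det = A.det * PowerSeries.C a := by
  have h0 : ((PowerSeries.constantCoeff (R := F)).mapMatrix A).det = 0 := by
    rw [← RingHom.map_det, hA]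
  obtain ⟨c, hc, hAc⟩ := Matrix.exists_mulVec_eq_zero_iff.mpr h0
  obtain ⟨k, hk⟩ := Function.ne_iff.mp hc
  have hdvd : ∀ i, ∃ w, (A *ᵥ fun j => PowerSeries.C (c j)) i = PowerSeries.X * w := by
    intro i
    have : PowerSeries.constantCoeff ((A *ᵥ fun j => PowerSeries.C (c j)) i) = 0 := by
      have := congrFun hAc i
      simpa [Matrix.mulVec, dotProduct] using this
    exact PowerSeries.X_dvd_iff.mpr this
  choose w hw using hdvd
  -- `E` is the identity with column `k` replaced by `t⁻¹ c`, so `B` is `A` with column `k`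
  -- replaced by `w = t⁻¹ A c`.
  refine ⟨(1 : Matrix _ _ _).updateCol k
      fun i => ⟨HahnSeries.single (-1) (c i), single_mem_laurentPolySubring _ _⟩,
    A.updateCol k w, c k, ?_, hk, ?_, ?_⟩
  · rw [Matrix.isUnit_iff_isUnit_det, ← Matrix.cramer_apply, Matrix.cramer_one]
    exact isUnit_single_laurentPolySubring (-1) hk
  · simp only [RingHom.mapMatrix_apply, Matrix.map_updateCol, Matrix.mul_updateCol]
    rw [Matrix.map_one (laurentPolySubring F).subtype (map_zero _) (map_one _), mul_one]
    congr 1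
    funext i
    have h := congrArg (fun x => HahnSeries.single (-1 : ℤ) (1 : F) *
      HahnSeries.ofPowerSeries ℤ F x) (hw i)
    simp only [map_mul, HahnSeries.ofPowerSeries_X, ← mul_assoc,
      HahnSeries.single_mul_single] at h
    simp only [Matrix.mulVec, dotProduct, map_sum, map_mul, HahnSeries.ofPowerSeries_C,
      Finset.mul_sum] at h
    have h1 : (HahnSeries.single (-1 + 1 : ℤ) (1 * 1 : F)) = 1 := by simp
    rw [h1, one_mul] at h
    simp only [Function.comp_apply]
    rw [← h]
    simp only [Matrix.mulVec, dotProduct, Matrix.map_apply, Function.comp_apply]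
    refine Finset.sum_congr rfl fun j _ => ?_
    rw [mul_left_comm, HahnSeries.C_apply, HahnSeries.single_mul_single]
    simp
  · have h1 : A.updateCol k ((PowerSeries.X : PowerSeries F) • w)
        = A * (1 : Matrix _ _ _).updateCol k fun j => PowerSeries.C (c j) := by
      rw [Matrix.mul_updateCol, mul_one]
      congr 1
      funext i
      simp [hw]
    rw [← Matrix.det_updateCol_smul, h1, Matrix.det_mul]
    congr 1
    rw [← Matrix.cramer_apply, Matrix.cramer_one]
    simp

/-- Induction on the valuation `n` of the determinant: a matrix over `F[[t]]` with nonzero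
determinant can be moved into `GL_r(F[[t]])` by right multiplication with an element of
`GL_r(F[t,t⁻¹])`. -/
theorem exists_laurent_mul_isUnit {F : Type*} [Field F] {r : ℕ} (n : ℕ) :
    ∀ (A : Matrix (Fin r) (Fin r) (PowerSeries F)) (u : PowerSeries F), IsUnit u →
      A.det = PowerSeries.X ^ n * u →
    ∃ (E : Matrix (Fin r) (Fin r) (laurentPolySubring F))
      (P : Matrix (Fin r) (Fin r) (PowerSeries F)), IsUnit E ∧ IsUnit P ∧
      (HahnSeries.ofPowerSeries ℤ F).mapMatrix A * (laurentPolySubring F).subtype.mapMatrix E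
        = (HahnSeries.ofPowerSeries ℤ F).mapMatrix P := by
  induction n with
  | zero =>
    intro A u hu hA
    refine ⟨1, A, isUnit_one, ?_, by simp⟩
    rw [Matrix.isUnit_iff_isUnit_det, hA]
    simpa using hu
  | succ n ih =>
    intro A u hu hA
    obtain ⟨E, B, a, hE, ha, hAE, hB⟩ := exists_laurent_column_step A (by rw [hA]; simp)
    have hB' : B.det = PowerSeries.X ^ n * (u * PowerSeries.C a) := by
      apply mul_left_cancel₀ (PowerSeries.X_ne_zero (R := F))
      rw [hB, hA]; ring
    obtain ⟨E', P, hE', hP, h⟩ := ih B _ (hu.mul ((IsUnit.mk0 a ha).map PowerSeries.C)) hB'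
    exact ⟨E * E', P, hE.mul hE', hP, by rw [map_mul, ← mul_assoc, hAE, h]⟩

/-- The factorization `GL_r(F((t))) = GL_r(F[[t]]) · GL_r(F[t,t⁻¹])`, written as `G E = P`. -/
theorem exists_factorization {F : Type*} [Field F] {r : ℕ}
    (G : Matrix (Fin r) (Fin r) (LaurentSeries F)) (hG : IsUnit G) :
    ∃ (E : Matrix (Fin r) (Fin r) (laurentPolySubring F))
      (P : Matrix (Fin r) (Fin r) (PowerSeries F)), IsUnit E ∧ IsUnit P ∧
      G * (laurentPolySubring F).subtype.mapMatrix E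
        = (HahnSeries.ofPowerSeries ℤ F).mapMatrix P := by
  obtain ⟨⟨b, k, rfl⟩, hb⟩ := IsLocalization.exist_integer_multiples_of_finite
    (Submonoid.powers (PowerSeries.X : PowerSeries F))
    (fun ij : Fin r × Fin r => G ij.1 ij.2)
  choose A hA using hb
  let A' : Matrix (Fin r) (Fin r) (PowerSeries F) := Matrix.of fun i j => A (i, j)
  have hA' : (HahnSeries.ofPowerSeries ℤ F).mapMatrix A'
      = HahnSeries.single (k : ℤ) (1 : F) • G := by
    ext1 i j
    have h := hA (i, j)
    simp only [Algebra.smul_def, LaurentSeries.coe_algebraMap,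
      HahnSeries.ofPowerSeries_X_pow] at h
    simpa [A'] using h
  have hs : (HahnSeries.single (k : ℤ) (1 : F)) ≠ 0 := by simp
  have hdet : A'.det ≠ 0 := by
    intro h
    have h1 := congrArg Matrix.det hA'
    rw [← RingHom.map_det, h, map_zero, Matrix.det_smul] at h1
    exact mul_ne_zero (pow_ne_zero _ hs) ((Matrix.isUnit_iff_isUnit_det _).mp hG).ne_zero h1.symm
  obtain ⟨E, P, hE, hP, h⟩ := exists_laurent_mul_isUnit _ A' _
    (PowerSeries.isUnit_divided_by_X_pow_order hdet)
    (PowerSeries.X_pow_order_mul_divXPowOrder).symm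
  let s : laurentPolySubring F := ⟨_, single_mem_laurentPolySubring (k : ℤ) (1 : F)⟩
  have hsu : IsUnit s := isUnit_single_laurentPolySubring (k : ℤ) one_ne_zero
  refine ⟨s • E, P, ?_, hP, ?_⟩
  · rw [Matrix.isUnit_iff_isUnit_det, Matrix.det_smul]
    exact (hsu.pow _).mul ((Matrix.isUnit_iff_isUnit_det _).mp hE)
  · rw [← h, hA', Matrix.smul_mul, ← Matrix.mul_smul]
    congr 1

/-! ### The derivative and simple poles -/

theorem derivative_single_mul {F : Type*} [Field F] (a : ℤ) (x : LaurentSeries F) :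
    LaurentSeries.derivative F (HahnSeries.single a 1 * x)
      = (a : LaurentSeries F) * HahnSeries.single (a - 1) 1 * x
        + HahnSeries.single a 1 * LaurentSeries.derivative F x := by
  have ha : (a : LaurentSeries F) = HahnSeries.single (0 : ℤ) (a : F) := by
    rw [← HahnSeries.C_apply, map_intCast]
  rw [ha, HahnSeries.single_mul_single]
  ext n
  simp only [LaurentSeries.derivative_apply, LaurentSeries.hasseDeriv_coeff, HahnSeries.coeff_add,
    HahnSeries.coeff_single_mul, Nat.cast_one, Ring.choose_one_right, zsmul_eq_mul]
  have h1 : n - (0 + (a - 1)) = n + 1 - a := by ring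
  have h2 : n - a + 1 = n + 1 - a := by ring
  rw [h1, h2]
  push_cast
  ring

theorem derivative_ofPowerSeries {F : Type*} [Field F] (f : PowerSeries F) :
    LaurentSeries.derivative F (HahnSeries.ofPowerSeries ℤ F f)
      = HahnSeries.ofPowerSeries ℤ F (PowerSeries.derivative F f) := by
  ext n
  simp only [LaurentSeries.derivative_apply, LaurentSeries.hasseDeriv_coeff,
    Nat.cast_one, Ring.choose_one_right, zsmul_eq_mul]
  rcases lt_trichotomy n (-1) with h | rfl | h
  · rw [PowerSeries.coeff_coe, PowerSeries.coeff_coe, if_pos (by omega), if_pos (by omega),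
      mul_zero]
  · simp [PowerSeries.coeff_coe]
  · lift n to ℕ using by omega
    rw [PowerSeries.coeff_coe, PowerSeries.coeff_coe, if_neg (by omega), if_neg (by omega),
      PowerSeries.coeff_derivative]
    have : ((n : ℤ) + 1).natAbs = n + 1 := by omega
    rw [this]
    push_cast
    simp [mul_comm]

/-- The Leibniz rule on `F((t))`, reduced to that of `F[[t]]` by splitting off a power of `t`
from each factor. -/
theorem derivative_mul {F : Type*} [Field F] (x y : LaurentSeries F) :
    LaurentSeries.derivative F (x * y)
      = LaurentSeries.derivative F x * y + x * LaurentSeries.derivative F y := by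
  rw [← x.single_order_mul_powerSeriesPart, ← y.single_order_mul_powerSeriesPart]
  generalize HahnSeries.order x = a
  generalize HahnSeries.order y = b
  generalize LaurentSeries.powerSeriesPart x = f
  generalize LaurentSeries.powerSeriesPart y = g
  rw [mul_assoc (HahnSeries.single a 1), mul_left_comm (HahnSeries.ofPowerSeries ℤ F f)]
  simp only [derivative_single_mul]
  rw [← map_mul, derivative_ofPowerSeries, derivative_ofPowerSeries, derivative_ofPowerSeries,
    Derivation.leibniz]
  simp only [smul_eq_mul, map_add, map_mul]
  ring

theorem matDeriv_mul {F : Type*} [Field F] {r : ℕ}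
    (A B : Matrix (Fin r) (Fin r) (LaurentSeries F)) :
    matDeriv F (A * B) = matDeriv F A * B + A * matDeriv F B := by
  ext1 i j
  simp only [matDeriv, Matrix.map_apply, Matrix.mul_apply, Matrix.add_apply, map_sum,
    derivative_mul, Finset.sum_add_distrib]

theorem simplePole_iff {F : Type*} [Field F] {r : ℕ}
    (M : Matrix (Fin r) (Fin r) (LaurentSeries F)) :
    SimplePole F M ↔ ∃ K : Matrix (Fin r) (Fin r) (PowerSeries F),
      HahnSeries.single (1 : ℤ) (1 : F) • M = (HahnSeries.ofPowerSeries ℤ F).mapMatrix K := by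
  constructor
  · intro h
    choose K hK using h
    exact ⟨Matrix.of K, by ext1 i j; simp [hK]⟩
  · rintro ⟨K, hK⟩ i j
    exact ⟨K i j, (congrFun (congrFun hK i) j).symm⟩

/-- With `P = Q⁻¹`, this says that a gauge transform by an element of `GL_r(F[[t]])` preserves
simple poles; the estimate holds for arbitrary integral `Q` and `P`. -/
theorem SimplePole.gauge {F : Type*} [Field F] {r : ℕ}
    {M : Matrix (Fin r) (Fin r) (LaurentSeries F)} (hM : SimplePole F M)
    (Q P : Matrix (Fin r) (Fin r) (PowerSeries F)) :
    SimplePole F ((HahnSeries.ofPowerSeries ℤ F).mapMatrix Q * M *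
        (HahnSeries.ofPowerSeries ℤ F).mapMatrix P +
      matDeriv F ((HahnSeries.ofPowerSeries ℤ F).mapMatrix Q) *
        (HahnSeries.ofPowerSeries ℤ F).mapMatrix P) := by
  rw [simplePole_iff] at hM ⊢
  obtain ⟨K, hK⟩ := hM
  have hQ : matDeriv F ((HahnSeries.ofPowerSeries ℤ F).mapMatrix Q)
      = (HahnSeries.ofPowerSeries ℤ F).mapMatrix (Q.map (PowerSeries.derivative F)) := by
    ext1 i j
    exact derivative_ofPowerSeries _
  have hX : ∀ Z : Matrix (Fin r) (Fin r) (PowerSeries F),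
      HahnSeries.single (1 : ℤ) (1 : F) • (HahnSeries.ofPowerSeries ℤ F).mapMatrix Z
        = (HahnSeries.ofPowerSeries ℤ F).mapMatrix ((PowerSeries.X : PowerSeries F) • Z) := by
    intro Z
    ext1 i j
    simp
  refine ⟨Q * K * P + (PowerSeries.X : PowerSeries F) • (Q.map (PowerSeries.derivative F) * P), ?_⟩
  rw [hQ, smul_add, ← Matrix.smul_mul, ← Matrix.mul_smul, hK, ← map_mul, ← map_mul, ← map_mul, hX,
    map_add]

/-- If some gauge transform `N_[G] = G·N·G⁻¹ + G′·G⁻¹` with `G ∈ GL_r(F((t)))` has at most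
a simple pole at `t = 0`, then there is `H ∈ GL_r(F[t,t⁻¹])` whose gauge transform
`N_[H]` already has at most a simple pole at `t = 0`. -/
theorem simple_pole_gauge_by_laurent_polynomial_matrix
    (F : Type*) [Field F] [CharZero F] (r : ℕ) (hr : 0 < r)
    (N : Matrix (Fin r) (Fin r) (LaurentSeries F))
    (hex : ∃ G Ginv : Matrix (Fin r) (Fin r) (LaurentSeries F),
      G * Ginv = 1 ∧ Ginv * G = 1 ∧
      SimplePole F (G * N * Ginv + matDeriv F G * Ginv)) :
    ∃ H Hinv : Matrix (Fin r) (Fin r) (LaurentSeries F),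
      H * Hinv = 1 ∧ Hinv * H = 1 ∧
      (∀ i j, InLaurentPoly F (H i j)) ∧ (∀ i j, InLaurentPoly F (Hinv i j)) ∧
      SimplePole F (H * N * Hinv + matDeriv F H * Hinv) := by
  obtain ⟨G, Ginv, hG1, hG2, hM⟩ := hex
  obtain ⟨_, _, ⟨E, rfl⟩, ⟨P, rfl⟩, h⟩ := exists_factorization G (IsUnit.of_mul_eq_one _ hG1)
  set φ := (laurentPolySubring F).subtype.mapMatrix (m := Fin r)
  set ρ := (HahnSeries.ofPowerSeries ℤ F).mapMatrix (m := Fin r)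
  have hE1 : φ E * φ ↑E⁻¹ = 1 := by rw [← map_mul, Units.mul_inv, map_one]
  have hE2 : φ ↑E⁻¹ * φ E = 1 := by rw [← map_mul, Units.inv_mul, map_one]
  have hP : ρ ↑P⁻¹ * ρ P = 1 := by rw [← map_mul, Units.inv_mul, map_one]
  have hH : φ ↑E⁻¹ = ρ ↑P⁻¹ * G := by
    calc φ ↑E⁻¹ = ρ ↑P⁻¹ * ρ P * φ ↑E⁻¹ := by rw [hP, one_mul]
      _ = ρ ↑P⁻¹ * G * (φ E * φ ↑E⁻¹) := by rw [← h]; simp only [mul_assoc]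
      _ = ρ ↑P⁻¹ * G := by rw [hE1, mul_one]
  have hHinv : φ E = Ginv * ρ P := by rw [← h, ← mul_assoc, hG2, one_mul]
  refine ⟨φ ↑E⁻¹, φ E, hE2, hE1, fun i j => Subtype.prop (E⁻¹.val i j),
    fun i j => Subtype.prop (E.val i j), ?_⟩
  have key : φ ↑E⁻¹ * N * φ E + matDeriv F (φ ↑E⁻¹) * φ E
      = ρ ↑P⁻¹ * (G * N * Ginv + matDeriv F G * Ginv) * ρ P + matDeriv F (ρ ↑P⁻¹) * ρ P := by
    have h1 : matDeriv F (ρ ↑P⁻¹) * ρ P = matDeriv F (ρ ↑P⁻¹) * (G * Ginv) * ρ P := by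
      rw [hG1, mul_one]
    rw [h1, hH, hHinv, matDeriv_mul]
    noncomm_ring
  rw [key]
  exact hM.gauge _ _
end
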